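/- Let A and B be the companion matrices of f(x) = (x-1)^6 and g(x) = (x+1)^4(x^2-x+1) respectively, regarded as elements of GL(6,ℤ). Then the elements t = A⁻¹B and r = A⁻¹BA both have infinite order, the subgroup of GL(6,ℤ) generated by A and B equals the subgroup generated by t and r, and this group is the internal free product of the cyclic subgroups ⟨t⟩ and ⟨r⟩; in particular, the hypergeometric group Γ(α,β) with α = (0,0,0,0,0,0) and β = (1/2,1/2,1/2,1/2,1/6,5/6) is isomorphic to ℤ * ℤ, a free group of rank 2. -/

import Mathlib

open Matrix

/-- The companion matrix of `f(x) = (x-1)^6 = x^6 - 6x^5 + 15x^4 - 20x^3 + 15x^2 - 6x + 1`. -/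
def companionF : Matrix (Fin 6) (Fin 6) ℤ :=
  !![0,0,0,0,0,-1; 1,0,0,0,0,6; 0,1,0,0,0,-15; 0,0,1,0,0,20; 0,0,0,1,0,-15; 0,0,0,0,1,6]

/-- The companion matrix of `g(x) = (x+1)^4(x^2-x+1) = x^6 + 3x^5 + 3x^4 + 2x^3 + 3x^2 + 3x + 1`. -/
def companionG : Matrix (Fin 6) (Fin 6) ℤ :=
  !![0,0,0,0,0,-1; 1,0,0,0,0,-3; 0,1,0,0,0,-3; 0,0,1,0,0,-2; 0,0,0,1,0,-3; 0,0,0,0,1,-3]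

namespace HGFree

/-- A real sequence `k ↦ a k³ + b k² + c k + d + q(k)`, where `q` has period three and zero mean,
with `q 0 = e` and `q 1 = f`. -/
@[ext]
structure Sq where
  a : ℚ
  b : ℚ
  c : ℚ
  d : ℚ
  e : ℚ
  f : ℚ

/-- Negation of a sequence. -/
def ng (x : Sq) : Sq := ⟨-x.a, -x.b, -x.c, -x.d, -x.e, -x.f⟩

/-- The reflection `σ ↦ (k ↦ -σ (-k))`. -/
def refl (x : Sq) : Sq := ⟨x.a, -x.b, x.c, -x.d, -x.e, x.e + x.f⟩

/-- The shift `σ ↦ (k ↦ σ (k + 1))`. -/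
def sh : Equiv.Perm Sq where
  toFun x := ⟨x.a, x.b + 3 * x.a, x.c + 2 * x.b + 3 * x.a, x.d + x.c + x.b + x.a,
    x.f, -x.e - x.f⟩
  invFun x := ⟨x.a, x.b - 3 * x.a, x.c - 2 * x.b + 3 * x.a, x.d - x.c + x.b - x.a,
    -x.e - x.f, x.e⟩
  left_inv x := by ext <;> simp <;> ring
  right_inv x := by ext <;> simp <;> ring

/-- The `n`-th power of the transvection. -/
def tv (n : ℚ) (x : Sq) : Sq :=
  ⟨x.a + n * (x.d + x.e) * (32 / 9), x.b, x.c + n * (x.d + x.e) * (48 / 9), x.d, x.e,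
    x.f + n * (x.d + x.e) * (1 / 9)⟩

/-- The open simplicial cone. -/
def Pos (x : Sq) : Prop :=
  0 < -x.a + 2 * x.c - 4 * x.d + 8 * x.f ∧
  0 < -x.b + 2 * x.d + 8 * x.e ∧
  0 < 9 * x.a - 3 * x.c - 4 * x.d - 40 * x.e - 72 * x.f ∧
  0 < 7 * x.b + x.d - 176 * x.e ∧
  0 < -216 * x.a + 147 * x.c - 254 * x.d + 1960 * x.e + 4428 * x.f ∧
  0 < -86 * x.b + 127 * x.d + 3748 * x.e

/-- The positive combinations of the six generators of the cone. -/
def gen (u0 u1 u2 u3 u4 u5 : ℚ) : Sq :=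
  ⟨4 * u0 + 240 * u1 + 512 * u2 + 368 * u3 + 8 * u4 + 16 * u5,
   -348 * u1 + 432 * u3 + 24 * u5,
   36 * u0 + 360 * u1 + 180 * u2 + 552 * u3 + 24 * u5,
   148 * u1 + 204 * u3 + 8 * u5,
   -13 * u1 + 3 * u3 + u5,
   -u0 + 14 * u1 + 19 * u2 + 10 * u3 + u4⟩

theorem Pos.exists_gen {x : Sq} (h : Pos x) : ∃ u0 u1 u2 u3 u4 u5 : ℚ,
    0 < u0 ∧ 0 < u1 ∧ 0 < u2 ∧ 0 < u3 ∧ 0 < u4 ∧ 0 < u5 ∧ x = gen u0 u1 u2 u3 u4 u5 := by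
  obtain ⟨h0, h1, h2, h3, h4, h5⟩ := h
  refine ⟨(-x.a + 2 * x.c - 4 * x.d + 8 * x.f) / 60, (-x.b + 2 * x.d + 8 * x.e) / 540,
    (9 * x.a - 3 * x.c - 4 * x.d - 40 * x.e - 72 * x.f) / 2700,
    (7 * x.b + x.d - 176 * x.e) / 2700,
    (-216 * x.a + 147 * x.c - 254 * x.d + 1960 * x.e + 4428 * x.f) / 2700,
    (-86 * x.b + 127 * x.d + 3748 * x.e) / 2700, by positivity, by positivity, by positivity,
    by positivity, by positivity, by positivity, ?_⟩
  ext <;> simp only [gen] <;> ring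

theorem Pos.tv {x : Sq} (h : Pos x) {n : ℚ} (hn : 0 ≤ n) : Pos (tv n x) := by
  obtain ⟨u0, u1, u2, u3, u4, u5, h0, h1, h2, h3, h4, h5, rfl⟩ := h.exists_gen
  refine ⟨?_, ?_, ?_, ?_, ?_, ?_⟩ <;> simp only [HGFree.tv, gen] <;> ring_nf <;> positivity

/-- The shift by `3 * m`. -/
def sh3 (m : ℚ) (x : Sq) : Sq :=
  ⟨x.a, x.b + 9 * m * x.a, x.c + 6 * m * x.b + 27 * m ^ 2 * x.a,
    x.d + 3 * m * x.c + 9 * m ^ 2 * x.b + 27 * m ^ 3 * x.a, x.e, x.f⟩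

theorem sh_apply (x : Sq) : sh x = ⟨x.a, x.b + 3 * x.a, x.c + 2 * x.b + 3 * x.a,
    x.d + x.c + x.b + x.a, x.f, -x.e - x.f⟩ := rfl

theorem sh_inv_apply (x : Sq) : sh⁻¹ x = ⟨x.a, x.b - 3 * x.a, x.c - 2 * x.b + 3 * x.a,
    x.d - x.c + x.b - x.a, -x.e - x.f, x.e⟩ := rfl

theorem sh_pow_three (m : ℕ) (x : Sq) : (sh ^ (3 * m)) x = sh3 m x := by
  induction m with
  | zero => ext <;> simp [sh3]
  | succ m ih =>
    rw [show 3 * (m + 1) = 1 + (1 + (1 + 3 * m)) by ring, pow_add, pow_add, pow_add, pow_one]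
    simp only [Equiv.Perm.mul_apply, ih, sh_apply, sh3]
    ext <;> push_cast <;> ring

theorem sh_inv_pow_three (m : ℕ) (x : Sq) : (sh⁻¹ ^ (3 * m)) x = sh3 (-m) x := by
  induction m with
  | zero => ext <;> simp [sh3]
  | succ m ih =>
    rw [show 3 * (m + 1) = 1 + (1 + (1 + 3 * m)) by ring, pow_add, pow_add, pow_add, pow_one]
    simp only [Equiv.Perm.mul_apply, ih, sh_inv_apply, sh3]
    ext <;> push_cast <;> ring

/-- Every positive integer is `1`, `2 + 3m`, `3 + 3m` or `4 + 3m`. -/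
theorem pos_cases {j : ℕ} (hj : 0 < j) :
    j = 1 ∨ ∃ m : ℕ, j = 1 + (1 + 3 * m) ∨ j = 1 + (1 + (1 + 3 * m)) ∨
      j = 1 + (1 + (1 + (1 + 3 * m))) := by
  by_cases h1 : j = 1
  · exact Or.inl h1
  · exact Or.inr ⟨(j - 2) / 3, by omega⟩

theorem step_pos {x : Sq} (h : Pos x) {j : ℕ} (hj : 0 < j) : Pos (tv 1 ((sh ^ j) x)) := by
  obtain ⟨u0, u1, u2, u3, u4, u5, h0, h1, h2, h3, h4, h5, rfl⟩ := h.exists_gen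
  rcases pos_cases hj with rfl | ⟨m, rfl | rfl | rfl⟩ <;>
  simp only [pow_add, pow_one, Equiv.Perm.mul_apply, sh_pow_three, sh_apply, tv, sh3, gen] <;>
  refine ⟨?_, ?_, ?_, ?_, ?_, ?_⟩ <;> ring_nf <;> positivity

theorem step_pos_refl {x : Sq} (h : Pos x) {j : ℕ} (hj : 0 < j) :
    Pos (ng (tv 1 (refl ((sh ^ j) x)))) := by
  obtain ⟨u0, u1, u2, u3, u4, u5, h0, h1, h2, h3, h4, h5, rfl⟩ := h.exists_gen
  rcases pos_cases hj with rfl | ⟨m, rfl | rfl | rfl⟩ <;>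
  simp only [pow_add, pow_one, Equiv.Perm.mul_apply, sh_pow_three, sh_apply, tv, sh3, gen, ng,
    refl] <;>
  refine ⟨?_, ?_, ?_, ?_, ?_, ?_⟩ <;> ring_nf <;> positivity

theorem step_neg {x : Sq} (h : Pos x) {j : ℕ} (hj : 0 < j) :
    Pos (ng (tv 1 ((sh⁻¹ ^ j) x))) := by
  obtain ⟨u0, u1, u2, u3, u4, u5, h0, h1, h2, h3, h4, h5, rfl⟩ := h.exists_gen
  rcases pos_cases hj with rfl | ⟨m, rfl | rfl | rfl⟩ <;>
  simp only [pow_add, pow_one, Equiv.Perm.mul_apply, sh_inv_pow_three, sh_inv_apply, tv, sh3,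
    gen, ng] <;>
  refine ⟨?_, ?_, ?_, ?_, ?_, ?_⟩ <;> ring_nf <;> positivity

theorem step_neg_refl {x : Sq} (h : Pos x) {j : ℕ} (hj : 0 < j) :
    Pos (tv 1 (refl ((sh⁻¹ ^ j) x))) := by
  obtain ⟨u0, u1, u2, u3, u4, u5, h0, h1, h2, h3, h4, h5, rfl⟩ := h.exists_gen
  rcases pos_cases hj with rfl | ⟨m, rfl | rfl | rfl⟩ <;>
  simp only [pow_add, pow_one, Equiv.Perm.mul_apply, sh_inv_pow_three, sh_inv_apply, tv, sh3,
    gen, refl] <;>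
  refine ⟨?_, ?_, ?_, ?_, ?_, ?_⟩ <;> ring_nf <;> positivity

/-! ### Symmetries -/

theorem ng_ng (x : Sq) : ng (ng x) = x := by ext <;> simp [ng]

theorem refl_refl (x : Sq) : refl (refl x) = x := by ext <;> simp [refl]

theorem refl_ng (x : Sq) : refl (ng x) = ng (refl x) := by
  ext <;> simp [refl, ng]; ring

theorem tv_ng (n : ℚ) (x : Sq) : tv n (ng x) = ng (tv n x) := by
  ext <;> simp only [tv, ng] <;> ring

theorem refl_tv (n : ℚ) (x : Sq) : refl (tv n x) = tv (-n) (refl x) := by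
  ext <;> simp only [tv, refl] <;> ring

theorem tv_add (m n : ℚ) (x : Sq) : tv (m + n) x = tv m (tv n x) := by
  ext <;> simp only [tv] <;> ring

theorem tv_zero (x : Sq) : tv 0 x = x := by
  ext <;> simp [tv]

theorem sh_ng (x : Sq) : sh (ng x) = ng (sh x) := by
  ext <;> simp only [sh_apply, ng] <;> ring

theorem sh_inv_ng (x : Sq) : sh⁻¹ (ng x) = ng (sh⁻¹ x) := by
  ext <;> simp only [sh_inv_apply, ng] <;> ring

theorem refl_sh (x : Sq) : refl (sh x) = sh⁻¹ (refl x) := by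
  ext <;> simp only [sh_apply, sh_inv_apply, refl] <;> ring

theorem refl_sh_inv (x : Sq) : refl (sh⁻¹ x) = sh (refl x) := by
  ext <;> simp only [sh_apply, sh_inv_apply, refl] <;> ring

theorem zpow_succ_apply (j : ℤ) (x : Sq) : (sh ^ (j + 1)) x = sh ((sh ^ j) x) := by
  rw [add_comm, _root_.zpow_add, zpow_one, Equiv.Perm.mul_apply]

theorem zpow_pred_apply (j : ℤ) (x : Sq) : (sh ^ (j - 1)) x = sh⁻¹ ((sh ^ j) x) := by
  rw [sub_eq_neg_add, _root_.zpow_add, _root_.zpow_neg_one, Equiv.Perm.mul_apply]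

theorem zpow_ng (j : ℤ) (x : Sq) : (sh ^ j) (ng x) = ng ((sh ^ j) x) := by
  induction j using Int.induction_on with
  | zero => simp
  | succ i ih => rw [zpow_succ_apply, ih, sh_ng, zpow_succ_apply]
  | pred i ih => rw [zpow_pred_apply, ih, sh_inv_ng, zpow_pred_apply]

theorem refl_zpow (j : ℤ) (x : Sq) : refl ((sh ^ j) x) = (sh ^ (-j)) (refl x) := by
  induction j using Int.induction_on with
  | zero => simp
  | succ i ih =>
    rw [zpow_succ_apply, refl_sh, ih, show -((i : ℤ) + 1) = -(i : ℤ) - 1 by ring, zpow_pred_apply]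
  | pred i ih =>
    rw [zpow_pred_apply, refl_sh_inv, ih, show -(-(i : ℤ) - 1) = - -(i : ℤ) + 1 by ring,
      zpow_succ_apply]

theorem zpow_ab (j : ℤ) (x : Sq) :
    ((sh ^ j) x).a = x.a ∧ ((sh ^ j) x).b = x.b + 3 * j * x.a := by
  induction j using Int.induction_on with
  | zero => simp
  | succ i ih =>
    rw [zpow_succ_apply, sh_apply]
    obtain ⟨h1, h2⟩ := ih
    refine ⟨h1, ?_⟩
    simp only [h1, h2]; push_cast; ring
  | pred i ih =>
    rw [zpow_pred_apply, sh_inv_apply]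
    obtain ⟨h1, h2⟩ := ih
    refine ⟨h1, ?_⟩
    simp only [h1, h2]; push_cast; ring

/-! ### The ping-pong domain -/

/-- The ping-pong domain: the cone, its reflection, and their negatives. -/
def Dom (x : Sq) : Prop := Pos x ∨ Pos (ng x) ∨ Pos (refl x) ∨ Pos (ng (refl x))

theorem Dom.ng {x : Sq} (h : Dom x) : Dom (ng x) := by
  unfold Dom at *
  rw [ng_ng, refl_ng, ng_ng]
  tauto

theorem Dom.refl {x : Sq} (h : Dom x) : Dom (refl x) := by
  unfold Dom at *
  rw [refl_refl]
  tauto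

theorem Dom.of_refl {x : Sq} (h : Dom (HGFree.refl x)) : Dom x := by
  simpa [refl_refl] using h.refl

theorem Dom.of_ng {x : Sq} (h : Dom (HGFree.ng x)) : Dom x := by
  simpa [ng_ng] using h.ng

theorem step_zpow {x : Sq} (h : Pos x) {j : ℤ} (hj : j ≠ 0) {n : ℚ} (hn : 1 ≤ n) :
    Dom (tv n ((sh ^ j) x)) ∧ Dom (tv n (refl ((sh ^ j) x))) := by
  obtain ⟨k, rfl⟩ : ∃ k, n = k + 1 := ⟨n - 1, by ring⟩
  have hk : 0 ≤ k := by linarith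
  rw [tv_add, tv_add]
  obtain ⟨i, rfl | rfl⟩ := j.eq_nat_or_neg
  · have hi : 0 < i := by omega
    rw [zpow_natCast]
    refine ⟨Or.inl ((step_pos h hi).tv hk), Or.inr (Or.inl ?_)⟩
    rw [← tv_ng]
    exact (step_pos_refl h hi).tv hk
  · have hi : 0 < i := by omega
    rw [_root_.zpow_neg, zpow_natCast, ← inv_pow]
    refine ⟨Or.inr (Or.inl ?_), Or.inl ((step_neg_refl h hi).tv hk)⟩
    rw [← tv_ng]
    exact (step_neg h hi).tv hk

theorem Dom.step_of_pos {x : Sq} (h : Dom x) {j : ℤ} (hj : j ≠ 0) {n : ℚ} (hn : 1 ≤ n) :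
    Dom (HGFree.tv n ((sh ^ j) x)) := by
  rcases h with h | h | h | h
  · exact (step_zpow h hj hn).1
  · apply Dom.of_ng
    rw [← tv_ng, ← zpow_ng]
    exact (step_zpow h hj hn).1
  · have := (step_zpow h (neg_ne_zero.mpr hj) hn).2
    rwa [refl_zpow, neg_neg, refl_refl] at this
  · have := (step_zpow h (neg_ne_zero.mpr hj) hn).2
    rw [refl_zpow, neg_neg, refl_ng, refl_refl, zpow_ng, tv_ng] at this
    exact this.of_ng

theorem Dom.step {x : Sq} (h : Dom x) {j n : ℤ} (hj : j ≠ 0) (hn : n ≠ 0) :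
    Dom (HGFree.tv n ((sh ^ j) x)) := by
  rcases lt_or_gt_of_ne hn with hn | hn
  · apply Dom.of_refl
    rw [refl_tv, refl_zpow]
    refine h.refl.step_of_pos (neg_ne_zero.mpr hj) ?_
    have : 1 ≤ -n := by omega
    exact_mod_cast this
  · refine h.step_of_pos hj ?_
    have : 1 ≤ n := by omega
    exact_mod_cast this

theorem Pos.bound {x : Sq} (h : Pos x) : 4 * x.b ^ 2 < 9 * x.a ^ 2 := by
  obtain ⟨u0, u1, u2, u3, u4, u5, h0, h1, h2, h3, h4, h5, rfl⟩ := h.exists_gen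
  have e1 : 0 < 3 * (gen u0 u1 u2 u3 u4 u5).a - 2 * (gen u0 u1 u2 u3 u4 u5).b := by
    simp only [gen]; ring_nf; positivity
  have e2 : 0 < 3 * (gen u0 u1 u2 u3 u4 u5).a + 2 * (gen u0 u1 u2 u3 u4 u5).b := by
    simp only [gen]; ring_nf; positivity
  nlinarith [mul_pos e1 e2]

theorem Dom.bound {x : Sq} (h : Dom x) : 4 * x.b ^ 2 < 9 * x.a ^ 2 := by
  rcases h with h | h | h | h <;> simpa [HGFree.ng, HGFree.refl] using h.bound

theorem Dom.not_zpow {x : Sq} (h : Dom x) {j : ℤ} (hj : j ≠ 0) : ¬ Dom ((sh ^ j) x) := by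
  intro h'
  have b1 := h.bound
  have b2 := h'.bound
  rw [(zpow_ab j x).1, (zpow_ab j x).2] at b2
  have ha : 0 < x.a ^ 2 := by nlinarith [sq_nonneg x.b]
  have hj2 : (1 : ℚ) ≤ (j : ℚ) ^ 2 := by
    have : 1 ≤ j ^ 2 := by
      have := Int.one_le_abs hj
      nlinarith [sq_abs j]
    exact_mod_cast this
  -- `(3 j a)² ≤ 2 b² + 2 (b + 3 j a)² < 9 a²`
  nlinarith [sq_nonneg (2 * x.b + 3 * j * x.a), mul_le_mul_of_nonneg_right hj2 ha.le]

/-! ### Coordinates -/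

/-- The coordinates of an integer vector. -/
def coord (y : Fin 6 → ℤ) : Sq where
  a := -y 0 + y 1 - y 2 + y 3 - y 4 - 63 * y 5
  b := 6 * y 0 - 3 * y 1 + 3 * y 3 - 6 * y 4 + 9 * y 5
  c := -9 * y 0 + 3 * y 2 - 9 * y 4 - 72 * y 5
  d := 2 * y 0 + 2 * y 1 - 2 * y 3 - 2 * y 4 + 18 * y 5
  e := -2 * y 0 - 2 * y 1 + 2 * y 3 + 2 * y 4
  f := 2 * y 0 - 2 * y 2 - 2 * y 3

/-- The matrix of `t = A⁻¹B`. -/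
def tMat : Matrix (Fin 6) (Fin 6) ℤ :=
  !![1,0,0,0,0,-9; 0,1,0,0,0,12; 0,0,1,0,0,-22; 0,0,0,1,0,12; 0,0,0,0,1,-9; 0,0,0,0,0,1]

/-- The matrix of `r = A⁻¹BA`. -/
def rMat : Matrix (Fin 6) (Fin 6) ℤ :=
  !![0,0,0,0,-9,-55; 1,0,0,0,12,78; 0,1,0,0,-22,-147; 0,0,1,0,12,92; 0,0,0,1,-9,-69;
    0,0,0,0,1,6]

theorem coord_t (y : Fin 6 → ℤ) : coord (tMat *ᵥ y) = tv 1 (coord y) := by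
  ext <;> simp [coord, tv, tMat, Matrix.mulVec, dotProduct, Fin.sum_univ_succ] <;> ring

theorem coord_r (y : Fin 6 → ℤ) : coord (rMat *ᵥ y) = ng (sh (coord y)) := by
  ext <;> simp [coord, sh_apply, ng, rMat, Matrix.mulVec, dotProduct, Fin.sum_univ_succ] <;> ring

/-- The base point lies in the domain. -/
theorem dom_base : Dom (coord ![-1675, 3089, -4830, 3026, -1639, 117]) := by
  left
  simp [Pos, coord]
  norm_num

/-! ### Ping-pong for two elements -/

open scoped Pointwise in
open Monoid in
theorem lift_injective {G : Type} [Group G] {α : Type} [MulAction G α] (t r : G) (X Y : Set α)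
    (hX : X.Nonempty) (hY : Y.Nonempty) (hd : Disjoint X Y)
    (ht : ∀ n : ℤ, n ≠ 0 → ∀ y ∈ Y, t ^ n • y ∈ X)
    (hr : ∀ n : ℤ, n ≠ 0 → ∀ y ∈ X, r ^ n • y ∈ Y) :
    Function.Injective (FreeGroup.lift ![t, r]) := by
  have : FreeGroup.lift ![t, r] =
      (CoprodI.lift fun i => FreeGroup.lift fun _ => (![t, r] : Fin 2 → G) i).comp
        (@freeGroupEquivCoprodI (Fin 2)).toMonoidHom := by
    ext i
    simp
  rw [this, MonoidHom.coe_comp]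
  clear this
  refine Function.Injective.comp ?_ (MulEquiv.injective freeGroupEquivCoprodI)
  let H : Fin 2 → Type := fun _ => FreeGroup Unit
  let f : ∀ i, H i →* G := fun i => FreeGroup.lift fun _ => (![t, r] : Fin 2 → G) i
  change Function.Injective (CoprodI.lift f)
  refine CoprodI.lift_injective_of_ping_pong f ?_ ![X, Y] ?_ ?_ ?_
  · right
    refine ⟨0, ?_⟩
    have : Infinite (H 0) := inferInstanceAs (Infinite (FreeGroup Unit))
    exact (Cardinal.natCast_le_aleph0 (n := 3)).trans (Cardinal.aleph0_le_mk _)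
  · intro i
    fin_cases i
    · exact hX
    · exact hY
  · intro i j hij
    fin_cases i <;> fin_cases j
    · exact absurd rfl hij
    · exact hd
    · exact hd.symm
    · exact absurd rfl hij
  · intro i j hij
    refine FreeGroup.freeGroupUnitEquivInt.forall_congr_left.mpr ?_
    intro n hne1
    have hn : n ≠ 0 := by
      rintro rfl
      apply hne1
      simp [FreeGroup.freeGroupUnitEquivInt]
    change FreeGroup.lift (fun _ => (![t, r] : Fin 2 → G) i) (FreeGroup.of () ^ n) •
      (![X, Y] : Fin 2 → Set α) j ⊆ (![X, Y] : Fin 2 → Set α) i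
    simp only [map_zpow, FreeGroup.lift_apply_of]
    rintro _ ⟨y, hy, rfl⟩
    fin_cases i <;> fin_cases j
    · exact absurd rfl hij
    · exact ht n hn y hy
    · exact hr n hn y hy
    · exact absurd rfl hij

/-! ### Group theory -/

theorem closure_pair_eq {G : Type} [Group G] (A B : G) :
    Subgroup.closure {A, B} = Subgroup.closure {A⁻¹ * B, A⁻¹ * B * A} := by
  apply le_antisymm
  · have h1 : A⁻¹ * B ∈ Subgroup.closure {A⁻¹ * B, A⁻¹ * B * A} :=
      Subgroup.subset_closure (by simp)
    have h2 : A⁻¹ * B * A ∈ Subgroup.closure {A⁻¹ * B, A⁻¹ * B * A} :=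
      Subgroup.subset_closure (by simp)
    have hA : A ∈ Subgroup.closure {A⁻¹ * B, A⁻¹ * B * A} := by
      have := mul_mem (inv_mem h1) h2
      simpa [mul_assoc] using this
    have hB : B ∈ Subgroup.closure {A⁻¹ * B, A⁻¹ * B * A} := by
      have := mul_mem hA h1
      simpa [mul_assoc] using this
    rw [Subgroup.closure_le]
    rintro x (rfl | rfl)
    · exact hA
    · exact hB
  · have h1 : A ∈ Subgroup.closure {A, B} := Subgroup.subset_closure (by simp)
    have h2 : B ∈ Subgroup.closure {A, B} := Subgroup.subset_closure (by simp)
    rw [Subgroup.closure_le]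
    rintro x (rfl | rfl)
    · exact mul_mem (inv_mem h1) h2
    · exact mul_mem (mul_mem (inv_mem h1) h2) h1

theorem range_lift_eq {G : Type} [Group G] (t r : G) :
    (FreeGroup.lift ![t, r]).range = Subgroup.closure {t, r} := by
  rw [FreeGroup.range_lift_eq_closure]
  congr 1
  simp [Matrix.range_cons, Set.pair_comm]

theorem coprod_range_eq {G : Type} [Group G] (t r : G) :
    (Monoid.Coprod.lift (Subgroup.zpowers t).subtype (Subgroup.zpowers r).subtype).range =
      Subgroup.closure {t, r} := by
  rw [Monoid.Coprod.range_lift, Subgroup.range_subtype, Subgroup.range_subtype,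
    Subgroup.zpowers_eq_closure, Subgroup.zpowers_eq_closure, ← Subgroup.closure_union]
  rfl

theorem not_fin {G : Type} [Group G] (a : Fin 2 → G)
    (h : Function.Injective (FreeGroup.lift a)) (i : Fin 2) : ¬ IsOfFinOrder (a i) := by
  have e : a i = FreeGroup.lift a (FreeGroup.of i) := by simp
  rw [e, h.isOfFinOrder_iff, isOfFinOrder_iff_pow_eq_one]
  rintro ⟨n, hn, hp⟩
  exact FreeGroup.of_ne_one i ((pow_eq_one_iff_left hn.ne').1 hp)

theorem coprod_injective {G : Type} [Group G] (t r : G)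
    (h : Function.Injective (FreeGroup.lift ![t, r])) :
    Function.Injective
      (Monoid.Coprod.lift (Subgroup.zpowers t).subtype (Subgroup.zpowers r).subtype) := by
  let κ : FreeGroup (Fin 2) →* Monoid.Coprod (Subgroup.zpowers t) (Subgroup.zpowers r) :=
    FreeGroup.lift ![Monoid.Coprod.inl ⟨t, Subgroup.mem_zpowers t⟩,
      Monoid.Coprod.inr ⟨r, Subgroup.mem_zpowers r⟩]
  have hκ : (Monoid.Coprod.lift (Subgroup.zpowers t).subtype (Subgroup.zpowers r).subtype).comp κ
      = FreeGroup.lift ![t, r] := by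
    ext i
    fin_cases i <;> simp [κ]
  have hs : Function.Surjective κ := by
    rw [← MonoidHom.range_eq_top, eq_top_iff, ← Monoid.Coprod.range_inl_sup_range_inr, sup_le_iff]
    constructor
    · rintro _ ⟨⟨_, n, rfl⟩, rfl⟩
      refine ⟨FreeGroup.of 0 ^ n, ?_⟩
      simp only [κ, map_zpow, FreeGroup.lift_apply_of]
      change (Monoid.Coprod.inl _) ^ n = _
      rw [← map_zpow]
      rfl
    · rintro _ ⟨⟨_, n, rfl⟩, rfl⟩
      refine ⟨FreeGroup.of 1 ^ n, ?_⟩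
      simp only [κ, map_zpow, FreeGroup.lift_apply_of]
      change (Monoid.Coprod.inr _) ^ n = _
      rw [← map_zpow]
      rfl
  intro x y hxy
  obtain ⟨u, rfl⟩ := hs x
  obtain ⟨v, rfl⟩ := hs y
  rw [← MonoidHom.comp_apply, ← MonoidHom.comp_apply, hκ] at hxy
  rw [h hxy]

/-! ### The action -/

/-- The linear action on integer vectors. -/
@[reducible] def act : MulAction (GL (Fin 6) ℤ) (Fin 6 → ℤ) where
  smul g y := g.1 *ᵥ y
  one_smul y := Matrix.one_mulVec y
  mul_smul g h y := (Matrix.mulVec_mulVec y g.1 h.1).symm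

theorem t_val (A B : GL (Fin 6) ℤ) (hA : A.1 = companionF) (hB : B.1 = companionG) :
    (A⁻¹ * B).1 = tMat := by
  have h : companionG = companionF * tMat := by decide +kernel
  rw [Units.val_mul, hB, h, ← hA, ← Matrix.mul_assoc, Units.inv_mul, Matrix.one_mul]

theorem r_val (A B : GL (Fin 6) ℤ) (hA : A.1 = companionF) (hB : B.1 = companionG) :
    (A⁻¹ * B * A).1 = rMat := by
  have h : tMat * companionF = rMat := by decide +kernel
  rw [Units.val_mul, t_val A B hA hB, hA, h]

theorem coord_t_zpow (t : GL (Fin 6) ℤ) (h : t.1 = tMat) (n : ℤ) (y : Fin 6 → ℤ) :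
    coord ((t ^ n).1 *ᵥ y) = tv n (coord y) := by
  have h1 : ∀ y, coord (t.1 *ᵥ y) = tv 1 (coord y) := fun y => by rw [h, coord_t]
  have h2 : ∀ y, coord ((t⁻¹).1 *ᵥ y) = tv (-1) (coord y) := fun y => by
    have := h1 ((t⁻¹).1 *ᵥ y)
    rw [Matrix.mulVec_mulVec, Units.mul_inv, Matrix.one_mulVec] at this
    rw [this, ← tv_add, neg_add_cancel, tv_zero]
  induction n using Int.induction_on with
  | zero => simp [tv_zero]
  | succ i ih =>
    rw [add_comm, _root_.zpow_add, zpow_one, Units.val_mul, ← Matrix.mulVec_mulVec, h1, ih,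
      ← tv_add]
    congr 1
    push_cast; ring
  | pred i ih =>
    rw [sub_eq_neg_add, _root_.zpow_add, _root_.zpow_neg_one, Units.val_mul, ← Matrix.mulVec_mulVec, h2,
      ih, ← tv_add]
    congr 1
    push_cast; ring

theorem coord_r_zpow (r : GL (Fin 6) ℤ) (h : r.1 = rMat) (n : ℤ) (y : Fin 6 → ℤ) :
    coord ((r ^ n).1 *ᵥ y) = (sh ^ n) (coord y) ∨
      coord ((r ^ n).1 *ᵥ y) = ng ((sh ^ n) (coord y)) := by
  have h1 : ∀ y, coord (r.1 *ᵥ y) = ng (sh (coord y)) := fun y => by rw [h, coord_r]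
  have h2 : ∀ y, coord ((r⁻¹).1 *ᵥ y) = ng (sh⁻¹ (coord y)) := fun y => by
    have := h1 ((r⁻¹).1 *ᵥ y)
    rw [Matrix.mulVec_mulVec, Units.mul_inv, Matrix.one_mulVec] at this
    rw [this, sh_inv_ng, ng_ng]
    exact (Equiv.symm_apply_apply sh _).symm
  induction n using Int.induction_on with
  | zero => simp
  | succ i ih =>
    rw [add_comm, _root_.zpow_add, zpow_one, Units.val_mul, ← Matrix.mulVec_mulVec, h1,
      add_comm, zpow_succ_apply]
    rcases ih with ih | ih <;> rw [ih]
    · exact Or.inr rfl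
    · left; rw [sh_ng, ng_ng]
  | pred i ih =>
    rw [zpow_pred_apply, sub_eq_neg_add, _root_.zpow_add, _root_.zpow_neg_one, Units.val_mul,
      ← Matrix.mulVec_mulVec, h2]
    rcases ih with ih | ih <;> rw [ih]
    · exact Or.inr rfl
    · left; rw [sh_inv_ng, ng_ng]

theorem dom_r_zpow (r : GL (Fin 6) ℤ) (h : r.1 = rMat) (n : ℤ) (y : Fin 6 → ℤ) :
    Dom (coord ((r ^ n).1 *ᵥ y)) ↔ Dom ((sh ^ n) (coord y)) := by
  rcases coord_r_zpow r h n y with e | e <;> rw [e]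
  exact ⟨Dom.of_ng, Dom.ng⟩

theorem main_injective (t r : GL (Fin 6) ℤ) (ht : t.1 = tMat) (hr : r.1 = rMat) :
    Function.Injective (FreeGroup.lift ![t, r]) := by
  let _ := act
  refine lift_injective (α := Fin 6 → ℤ) t r {y | Dom (coord y)}
    {z | ∃ i : ℤ, i ≠ 0 ∧ ∃ y, Dom (coord y) ∧ z = (r ^ i).1 *ᵥ y} ⟨_, dom_base⟩
    ⟨_, 1, one_ne_zero, _, dom_base, rfl⟩ ?_ ?_ ?_
  · rw [Set.disjoint_left]
    rintro _ hz ⟨i, hi, y, hy, rfl⟩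
    exact hy.not_zpow hi ((dom_r_zpow r hr i y).1 hz)
  · rintro n hn _ ⟨i, hi, y, hy, rfl⟩
    change Dom (coord ((t ^ n).1 *ᵥ _))
    rw [coord_t_zpow t ht]
    rcases coord_r_zpow r hr i y with e | e <;> rw [e]
    · exact hy.step hi hn
    · rw [tv_ng]
      exact (hy.step hi hn).ng
  · intro n hn y hy
    exact ⟨n, hn, y, hy, rfl⟩

end HGFree

/-- The hypergeometric group with `α = (0,0,0,0,0,0)`, `β = (1/2,1/2,1/2,1/2,1/6,5/6)` is
free of rank two: `t = A⁻¹B` and `r = A⁻¹BA` have infinite order, generate the group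
generated by `A` and `B`, and the group is the internal free product of `⟨t⟩` and `⟨r⟩`;
in particular it is isomorphic to `ℤ * ℤ`, the free group of rank `2`. -/
theorem hypergeometric_free_of_rank_two
    (A B : GL (Fin 6) ℤ)
    (hA : (A : Matrix (Fin 6) (Fin 6) ℤ) = companionF)
    (hB : (B : Matrix (Fin 6) (Fin 6) ℤ) = companionG) :
    ¬ IsOfFinOrder (A⁻¹ * B) ∧ ¬ IsOfFinOrder (A⁻¹ * B * A) ∧
    Subgroup.closure {A, B} = Subgroup.closure {A⁻¹ * B, A⁻¹ * B * A} ∧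
    Function.Injective
      (Monoid.Coprod.lift (Subgroup.zpowers (A⁻¹ * B)).subtype
        (Subgroup.zpowers (A⁻¹ * B * A)).subtype) ∧
    (Monoid.Coprod.lift (Subgroup.zpowers (A⁻¹ * B)).subtype
        (Subgroup.zpowers (A⁻¹ * B * A)).subtype).range = Subgroup.closure {A, B} ∧
    Nonempty ((Subgroup.closure {A, B} : Subgroup (GL (Fin 6) ℤ)) ≃* FreeGroup (Fin 2)) := by
  have hi := HGFree.main_injective (A⁻¹ * B) (A⁻¹ * B * A) (HGFree.t_val A B hA hB)
    (HGFree.r_val A B hA hB)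
  have hc := HGFree.closure_pair_eq A B
  refine ⟨HGFree.not_fin _ hi 0, HGFree.not_fin _ hi 1, hc, HGFree.coprod_injective _ _ hi,
    ?_, ?_⟩
  · rw [hc]
    exact HGFree.coprod_range_eq _ _
  · rw [hc, ← HGFree.range_lift_eq]
    exact ⟨(MonoidHom.ofInjective hi).symm⟩
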